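/- Let k > d ≥ 0 be integers and let G be a k-degenerate finite simple graph on n vertices whose independence number equals n/(k+1) (the minimum possible for maximally k-degenerate graphs). Then α_d(G) ≥ (d−1)·n/(k+1). -/

import Mathlib

/-- The subgraph of `G` induced on `A` is `d`-degenerate: every nonempty (finite)
subset of `A` contains a vertex with at most `d` neighbours inside that subset. -/
def DegenOn {V : Type*} (G : SimpleGraph V) (d : ℕ) (A : Set V) : Prop :=
  ∀ S : Set V, S ⊆ A → S.Finite → S.Nonempty → ∃ v ∈ S, (S ∩ G.neighborSet v).ncard ≤ d

/-- `G` is `d`-degenerate. -/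
def Degen {V : Type*} (G : SimpleGraph V) (d : ℕ) : Prop :=
  DegenOn G d Set.univ

/-- `α_d(G)`: the maximum number of vertices of an induced `d`-degenerate subgraph of `G`. -/
noncomputable def alphaDeg {V : Type*} [Fintype V] (G : SimpleGraph V) (d : ℕ) : ℕ :=
  sSup {m : ℕ | ∃ A : Set V, DegenOn G d A ∧ A.ncard = m}

/-!
Build a finite `(a + b + 1)`-degenerate vertex set one vertex at a time, each new vertex having at
most `a + b + 1` neighbours among the earlier ones. Sorting the vertices greedily into two classes,
a new vertex has at most `a` neighbours in the first class or at most `b` in the second, so the set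
splits into an `a`-degenerate and a `b`-degenerate part; hence `α_{a+b+1} ≤ α_a + α_b`. Splitting
off `k - d` independent sets from a `k`-degenerate graph gives `n ≤ α_d + (k - d) α_0`, which for
`α_0 ≤ n / (k + 1)` reads `α_d ≥ (d + 1) n / (k + 1)`.
-/

section Degenerate

variable {V : Type*} {G : SimpleGraph V} {a b d : ℕ} {A B : Set V} {v : V}

theorem degenOn_empty : DegenOn G d ∅ :=
  fun _ hS _ hne ↦ (hne.mono hS).ne_empty rfl |>.elim

theorem DegenOn.mono (hA : DegenOn G d A) (hBA : B ⊆ A) : DegenOn G d B :=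
  fun S hS ↦ hA S (hS.trans hBA)

protected theorem DegenOn.insert (hB : DegenOn G d B) (hfin : (B ∩ G.neighborSet v).Finite)
    (hv : (B ∩ G.neighborSet v).ncard ≤ d) : DegenOn G d (insert v B) := by
  intro S hS hSfin hne
  by_cases hvS : v ∈ S
  · have hnbr : S ∩ G.neighborSet v ⊆ B ∩ G.neighborSet v := fun x ⟨hxS, hvx⟩ ↦
      ⟨(hS hxS).resolve_left (G.ne_of_adj hvx).symm, hvx⟩
    exact ⟨v, hvS, (Set.ncard_le_ncard hnbr hfin).trans hv⟩
  · exact hB S ((Set.subset_insert_iff_of_notMem hvS).1 hS) hSfin hne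

theorem DegenOn.induction_on {p : Set V → Prop} (hA : DegenOn G d A) (hfin : A.Finite)
    (empty : p ∅)
    (insert : ∀ (v : V) (B : Set V), v ∉ B → B.Finite → (B ∩ G.neighborSet v).ncard ≤ d →
      p B → p (insert v B)) : p A := by
  induction hn : A.ncard generalizing A with
  | zero => rwa [(Set.ncard_eq_zero hfin).1 hn]
  | succ n ih =>
    obtain ⟨v, hvA, hv⟩ := hA A subset_rfl hfin (Set.nonempty_of_ncard_ne_zero (by omega))
    have hnbr : (A \ {v}) ∩ G.neighborSet v ⊆ A ∩ G.neighborSet v :=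
      Set.inter_subset_inter_left _ Set.sdiff_subset
    have hp : p (A \ {v}) := ih (hA.mono Set.sdiff_subset) hfin.sdiff
      (by rw [Set.ncard_sdiff_singleton_of_mem hvA, hn, Nat.add_sub_cancel])
    rw [← Set.insert_sdiff_self_of_mem hvA]
    exact insert v _ (fun h ↦ h.2 rfl) hfin.sdiff
      ((Set.ncard_le_ncard hnbr (hfin.inter_of_left _)).trans hv) hp

theorem DegenOn.exists_disjoint_union (hA : DegenOn G (a + b + 1) A) (hfin : A.Finite) :
    ∃ B C : Set V, Disjoint B C ∧ B ∪ C = A ∧ DegenOn G a B ∧ DegenOn G b C := by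
  refine hA.induction_on hfin
    (p := fun A ↦ ∃ B C : Set V, Disjoint B C ∧ B ∪ C = A ∧ DegenOn G a B ∧ DegenOn G b C)
    ⟨∅, ∅, disjoint_bot_left, Set.union_empty ∅, degenOn_empty, degenOn_empty⟩ ?_
  rintro v _ hv hBC hnbr ⟨B, C, hdisj, rfl, hB, hC⟩
  obtain ⟨hvB, hvC⟩ : v ∉ B ∧ v ∉ C := not_or.1 hv
  have hBfin : (B ∩ G.neighborSet v).Finite := (hBC.subset Set.subset_union_left).inter_of_left _
  have hCfin : (C ∩ G.neighborSet v).Finite := (hBC.subset Set.subset_union_right).inter_of_left _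
  have hsum : (B ∩ G.neighborSet v).ncard + (C ∩ G.neighborSet v).ncard ≤ a + b + 1 := by
    rwa [← Set.ncard_union_eq (hdisj.mono Set.inter_subset_left Set.inter_subset_left) hBfin hCfin,
      ← Set.union_inter_distrib_right]
  obtain hvB_nbr | hvC_nbr :
      (B ∩ G.neighborSet v).ncard ≤ a ∨ (C ∩ G.neighborSet v).ncard ≤ b := by omega
  · exact ⟨insert v B, C, Set.disjoint_insert_left.2 ⟨hvC, hdisj⟩, Set.insert_union,
      hB.insert hBfin hvB_nbr, hC⟩
  · exact ⟨B, insert v C, Set.disjoint_insert_right.2 ⟨hvB, hdisj⟩, Set.union_insert,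
      hB, hC.insert hCfin hvC_nbr⟩

theorem bddAbove_ncard_degenOn [Finite V] (G : SimpleGraph V) (d : ℕ) :
    BddAbove {m : ℕ | ∃ A : Set V, DegenOn G d A ∧ A.ncard = m} :=
  ⟨Nat.card V, by rintro _ ⟨A, -, rfl⟩; exact Set.ncard_le_card A⟩

section Fintype

variable [Fintype V]

theorem DegenOn.ncard_le_alphaDeg (hA : DegenOn G d A) : A.ncard ≤ alphaDeg G d :=
  le_csSup (bddAbove_ncard_degenOn G d) ⟨A, hA, rfl⟩

theorem exists_degenOn_ncard_eq_alphaDeg (G : SimpleGraph V) (d : ℕ) :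
    ∃ A : Set V, DegenOn G d A ∧ A.ncard = alphaDeg G d :=
  Nat.sSup_mem (s := {m | ∃ A : Set V, DegenOn G d A ∧ A.ncard = m})
    ⟨_, ∅, degenOn_empty, rfl⟩ (bddAbove_ncard_degenOn G d)

theorem Degen.card_le_alphaDeg (hG : Degen G d) : Fintype.card V ≤ alphaDeg G d := by
  rw [← Nat.card_eq_fintype_card, ← Set.ncard_univ]
  exact DegenOn.ncard_le_alphaDeg hG

theorem alphaDeg_add_add_one_le (G : SimpleGraph V) (a b : ℕ) :
    alphaDeg G (a + b + 1) ≤ alphaDeg G a + alphaDeg G b := by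
  obtain ⟨A, hA, hcard⟩ := exists_degenOn_ncard_eq_alphaDeg G (a + b + 1)
  obtain ⟨B, C, -, rfl, hB, hC⟩ := hA.exists_disjoint_union A.toFinite
  calc alphaDeg G (a + b + 1) = (B ∪ C).ncard := hcard.symm
    _ ≤ B.ncard + C.ncard := Set.ncard_union_le B C
    _ ≤ alphaDeg G a + alphaDeg G b := add_le_add hB.ncard_le_alphaDeg hC.ncard_le_alphaDeg

theorem alphaDeg_add_le (G : SimpleGraph V) (d j : ℕ) :
    alphaDeg G (d + j) ≤ alphaDeg G d + j * alphaDeg G 0 := by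
  induction j with
  | zero => simp
  | succ j ih =>
    calc alphaDeg G (d + (j + 1)) ≤ alphaDeg G (d + j) + alphaDeg G 0 :=
          alphaDeg_add_add_one_le G (d + j) 0
      _ ≤ alphaDeg G d + j * alphaDeg G 0 + alphaDeg G 0 := by gcongr
      _ = alphaDeg G d + (j + 1) * alphaDeg G 0 := by ring

end Fintype

end Degenerate

theorem stmt_9_general {V : Type*} [Fintype V] (G : SimpleGraph V) (k d : ℕ) (hdk : d ≤ k)
    (hG : Degen G k)
    (hind : (alphaDeg G 0 : ℚ) ≤ (Fintype.card V : ℚ) / ((k : ℚ) + 1)) :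
    ((d : ℚ) + 1) * (Fintype.card V : ℚ) / ((k : ℚ) + 1) ≤ (alphaDeg G d : ℚ) := by
  obtain ⟨j, rfl⟩ := Nat.exists_eq_add_of_le hdk
  have hcover : (Fintype.card V : ℚ) ≤ alphaDeg G d + j * alphaDeg G 0 := by
    exact_mod_cast hG.card_le_alphaDeg.trans (alphaDeg_add_le G d j)
  set n : ℚ := (Fintype.card V : ℚ)
  calc ((d : ℚ) + 1) * n / ((d + j : ℕ) + 1) = n - j * (n / ((d + j : ℕ) + 1)) := by
        push_cast; field_simp; ring
    _ ≤ n - j * alphaDeg G 0 := by gcongr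
    _ ≤ alphaDeg G d := sub_le_iff_le_add.2 hcover

theorem stmt_9 {V : Type*} [Fintype V] (G : SimpleGraph V) (k d : ℕ) (hdk : d < k)
    (hG : Degen G k)
    (hind : (alphaDeg G 0 : ℚ) = (Fintype.card V : ℚ) / ((k : ℚ) + 1)) :
    ((d : ℚ) - 1) * (Fintype.card V : ℚ) / ((k : ℚ) + 1) ≤ (alphaDeg G d : ℚ) :=
  le_trans (by gcongr; linarith) (stmt_9_general G k d hdk.le hG hind.le)
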